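/- arXiv:1412.2681 — 2 statements merged into one kernel-verified Lean document; each statement's English description precedes it below -/
import Mathlib

section
/- The smallest nonzero singular value of U equals min{√m, √n}: for every z ∈ ℂ^{m+n} with 1_{m+n}ᵀ z = 0 (i.e., z orthogonal to the kernel of U), one has ‖Uz‖₂ ≥ min{√m, √n}·‖z‖₂. -/
/-!
Expanding `∑ ‖s i - t j‖ ^ 2` over all pairs gives `n ∑ ‖s i‖ ^ 2 + m ∑ ‖t j‖ ^ 2` minus twice the
inner product of `∑ s i` and `∑ t j`. When these two sums are opposite, that inner product is
`-‖∑ s i‖ ^ 2 ≤ 0`, so the cross term can only help, and both weights are at least `min m n`.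
-/

open Matrix

/-- The matrix `U = [I_m ⊗ 1_n, −1_m ⊗ I_n]`: rows indexed by pairs `(i,j)`,
columns by `Fin m ⊕ Fin n`, so that `(U z)_{(i,j)} = s_i − t_j` for `z = [s; t]`. -/
def Umat (m n : ℕ) : Matrix (Fin m × Fin n) (Fin m ⊕ Fin n) ℂ :=
  fun p => Sum.elim (fun k => if k = p.1 then 1 else 0) (fun l => if l = p.2 then -1 else 0)

theorem Umat_mulVec_apply (m n : ℕ) (z : Fin m ⊕ Fin n → ℂ) (p : Fin m × Fin n) :
    (Umat m n).mulVec z p = z (Sum.inl p.1) - z (Sum.inr p.2) := by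
  simp [Umat, mulVec, dotProduct, Fintype.sum_sum_type, sub_eq_add_neg]

section RealInnerProduct

open scoped RealInnerProductSpace

variable {ι κ E : Type*} [SeminormedAddCommGroup E] [InnerProductSpace ℝ E]

theorem real_inner_nonpos_of_add_eq_zero {x y : E} (h : x + y = 0) : ⟪x, y⟫ ≤ 0 := by
  rw [eq_neg_of_add_eq_zero_right h, inner_neg_right]
  exact neg_nonpos.mpr real_inner_self_nonneg

theorem sum_product_norm_sub_sq (S : Finset ι) (T : Finset κ) (s : ι → E) (t : κ → E) :
    ∑ p ∈ S ×ˢ T, ‖s p.1 - t p.2‖ ^ 2 =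
      T.card * ∑ i ∈ S, ‖s i‖ ^ 2 + S.card * ∑ j ∈ T, ‖t j‖ ^ 2
        - 2 * ⟪∑ i ∈ S, s i, ∑ j ∈ T, t j⟫ := by
  simp only [Finset.sum_product, norm_sub_sq_real, Finset.sum_add_distrib, Finset.sum_sub_distrib,
    Finset.sum_const, nsmul_eq_mul, ← Finset.mul_sum, ← inner_sum, ← sum_inner]
  ring

theorem min_card_mul_sum_norm_sq_le (S : Finset ι) (T : Finset κ) {s : ι → E} {t : κ → E}
    (h : ⟪∑ i ∈ S, s i, ∑ j ∈ T, t j⟫ ≤ 0) :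
    min (S.card : ℝ) T.card * (∑ i ∈ S, ‖s i‖ ^ 2 + ∑ j ∈ T, ‖t j‖ ^ 2) ≤
      ∑ p ∈ S ×ˢ T, ‖s p.1 - t p.2‖ ^ 2 :=
  calc
    _ = min (S.card : ℝ) T.card * ∑ i ∈ S, ‖s i‖ ^ 2
          + min (S.card : ℝ) T.card * ∑ j ∈ T, ‖t j‖ ^ 2 := mul_add _ _ _
    _ ≤ T.card * ∑ i ∈ S, ‖s i‖ ^ 2 + S.card * ∑ j ∈ T, ‖t j‖ ^ 2 := by
      gcongr
      · exact min_le_right _ _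
      · exact min_le_left _ _
    _ ≤ T.card * ∑ i ∈ S, ‖s i‖ ^ 2 + S.card * ∑ j ∈ T, ‖t j‖ ^ 2
          - 2 * ⟪∑ i ∈ S, s i, ∑ j ∈ T, t j⟫ := by linarith
    _ = ∑ p ∈ S ×ˢ T, ‖s p.1 - t p.2‖ ^ 2 := (sum_product_norm_sub_sq S T s t).symm

theorem smallest_nonzero_singular_value_U_general [Fintype ι] [Fintype κ] (z : ι ⊕ κ → E)
    (hz : ⟪∑ i, z (Sum.inl i), ∑ j, z (Sum.inr j)⟫ ≤ 0) :
    min √(Fintype.card ι) √(Fintype.card κ) * √(∑ q, ‖z q‖ ^ 2) ≤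
      √(∑ p : ι × κ, ‖z (Sum.inl p.1) - z (Sum.inr p.2)‖ ^ 2) := by
  rw [← Real.sqrt_monotone.map_min, ← Real.sqrt_mul (by positivity), Fintype.sum_sum_type]
  exact Real.sqrt_le_sqrt (min_card_mul_sum_norm_sq_le Finset.univ Finset.univ hz)

end RealInnerProduct

/-- The smallest nonzero singular value of `U` equals `min{√m, √n}`: for every
`z` orthogonal to the kernel of `U` (i.e. with `1_{m+n}ᵀ z = 0`) one has
`‖Uz‖₂ ≥ min{√m, √n}·‖z‖₂`. -/
theorem smallest_nonzero_singular_value_U (m n : ℕ) (hm : 0 < m) (hn : 0 < n) :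
    ∀ z : Fin m ⊕ Fin n → ℂ, (∑ q, z q) = 0 →
      min (Real.sqrt m) (Real.sqrt n) * Real.sqrt (∑ q, ‖z q‖ ^ 2) ≤
        Real.sqrt (∑ p, ‖(Umat m n).mulVec z p‖ ^ 2) := by
  intro z hz
  rw [Fintype.sum_sum_type] at hz
  simpa only [Umat_mulVec_apply, Fintype.card_fin] using
    smallest_nonzero_singular_value_U_general z (real_inner_nonpos_of_add_eq_zero hz)
end

section
/- Recovery of Cauchy points from a noisy Cauchy matrix: let s̃ ∈ ℂ^m, t̃ ∈ ℂ^n be Cauchy points with ∑_i s̃_i + ∑_j t̃_j = 0 (normalized Cauchy points), let N = [n_{ij}] ∈ ℂ^{m,n}, and suppose A = C(s̃,t̃) + N has all entries nonzero. Define r ∈ ℂ^m by r_i = (1/n)∑_j 1/a_{ij}, c ∈ ℂ^n by c_j = (1/m)∑_i 1/a_{ij}, σ = (1/(mn))∑_{i,j} 1/a_{ij}, and set ŝ = r − (mσ/(m+n))·1_m, t̂ = −c + (nσ/(m+n))·1_n. If γ := max_{i,j} |(s̃_i − t̃_j)·n_{ij}| < 1, then ‖[s̃; t̃] − [ŝ;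 t̂]‖₂ ≤ (√(m+n)/min{√m, √n}) · (γ/(1−γ)) · ‖[s̃; t̃]‖₂. -/
/-!
Put `y i j = 1 / a i j`. The points `ŝ, t̂` are the least squares fit of `y` by differences
`x i - z j`: the residual has zero row and column sums, hence is orthogonal to all matrices of that
form. By Pythagoras, the matrix of differences of the errors `s̃ - ŝ`, `t̃ - t̂` is therefore no
larger than the matrix with entries `s̃ i - t̃ j - y i j`, each of which is at most `γ / (1 - γ)`
times `‖s̃ i - t̃ j‖`. It remains to note that `(x, z) ↦ (x i - z j)` has norm at most `√(m + n)`,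
and that it stretches vectors by a factor of at least `min √m √n` on the subspace
`∑ x + ∑ z = 0`, which contains the errors.
-/

open scoped InnerProductSpace

variable {ι κ E : Type*} [Fintype ι] [Fintype κ]

section Fit

variable [AddCommGroup E] [Module ℝ E]

/-- The `x`-part of the minimum-norm least squares fit of the matrix `y` by differences `x i - z j`.
With the row means `r` and the grand mean `σ` of an `m × n` matrix it is `r i - m σ / (m + n)`, as
`σ` is the sum of all entries divided by `m n`. -/
noncomputable def rowFit (y : ι → κ → E) (i : ι) : E :=
  (Fintype.card κ : ℝ)⁻¹ •
    (∑ j, y i j - (Fintype.card ι + Fintype.card κ : ℝ)⁻¹ • ∑ i, ∑ j, y i j)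

/-- The `z`-part of the minimum-norm least squares fit of the matrix `y` by differences `x i - z j`.
Transposing `y` exchanges the roles of `x` and `-z`. -/
noncomputable def colFit (y : ι → κ → E) (j : κ) : E :=
  -rowFit (fun j i => y i j) j

lemma sum_rowFit [Nonempty κ] (y : ι → κ → E) :
    ∑ i, rowFit y i = (Fintype.card ι + Fintype.card κ : ℝ)⁻¹ • ∑ i, ∑ j, y i j := by
  simp only [rowFit, ← Finset.smul_sum, Finset.sum_sub_distrib, Finset.sum_const,
    Finset.card_univ, ← Nat.cast_smul_eq_nsmul ℝ]
  match_scalars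
  field_simp
  ring

lemma sum_colFit [Nonempty ι] (y : ι → κ → E) :
    ∑ j, colFit y j = -((Fintype.card ι + Fintype.card κ : ℝ)⁻¹ • ∑ i, ∑ j, y i j) := by
  simp only [colFit, Finset.sum_neg_distrib, sum_rowFit]
  rw [Finset.sum_comm, add_comm]

lemma sum_rowFit_add_sum_colFit [Nonempty ι] [Nonempty κ] (y : ι → κ → E) :
    ∑ i, rowFit y i + ∑ j, colFit y j = 0 := by
  rw [sum_rowFit, sum_colFit, add_neg_cancel]

lemma sum_residual_row_eq_zero [Nonempty ι] [Nonempty κ] (y : ι → κ → E) (i : ι) :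
    ∑ j, (rowFit y i - colFit y j - y i j) = 0 := by
  have hκ : (Fintype.card κ : ℝ) ≠ 0 := by exact_mod_cast Fintype.card_ne_zero
  simp only [Finset.sum_sub_distrib, sum_colFit, Finset.sum_const, Finset.card_univ,
    ← Nat.cast_smul_eq_nsmul ℝ, rowFit, smul_inv_smul₀ hκ]
  abel

lemma sum_residual_col_eq_zero [Nonempty ι] [Nonempty κ] (y : ι → κ → E) (j : κ) :
    ∑ i, (rowFit y i - colFit y j - y i j) = 0 := by
  rw [← sum_residual_row_eq_zero (fun j i => y i j) j]
  exact Finset.sum_congr rfl fun i _ => by simp only [colFit]; abel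

lemma rowFit_complex [Nonempty ι] (y : ι → κ → ℂ) (i : ι) :
    rowFit y i = (Fintype.card κ : ℂ)⁻¹ * ∑ j, y i j - Fintype.card ι *
      ((Fintype.card ι * Fintype.card κ : ℂ)⁻¹ * ∑ i, ∑ j, y i j) /
        (Fintype.card ι + Fintype.card κ) := by
  simp only [rowFit, Complex.real_smul]
  push_cast
  field_simp

lemma colFit_complex [Nonempty κ] (y : ι → κ → ℂ) (j : κ) :
    colFit y j = -((Fintype.card ι : ℂ)⁻¹ * ∑ i, y i j) + Fintype.card κ *
      ((Fintype.card ι * Fintype.card κ : ℂ)⁻¹ * ∑ i, ∑ j, y i j) /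
        (Fintype.card ι + Fintype.card κ) := by
  rw [colFit, rowFit_complex, Finset.sum_comm, neg_sub', sub_neg_eq_add,
    mul_comm (Fintype.card κ : ℂ) (Fintype.card ι), add_comm (Fintype.card κ : ℂ)]

end Fit

section InnerProductSpace

variable [SeminormedAddCommGroup E]

lemma norm_sum_sq_le_card_mul_sum_norm_sq (x : ι → E) :
    ‖∑ i, x i‖ ^ 2 ≤ Fintype.card ι * ∑ i, ‖x i‖ ^ 2 :=
  calc ‖∑ i, x i‖ ^ 2 ≤ (∑ i, ‖x i‖) ^ 2 := by gcongr; exact norm_sum_le _ _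
    _ ≤ Fintype.card ι * ∑ i, ‖x i‖ ^ 2 := sq_sum_le_card_mul_sum_sq

variable [InnerProductSpace ℝ E]

lemma sum_sum_norm_sub_sq (x : ι → E) (z : κ → E) :
    ∑ i, ∑ j, ‖x i - z j‖ ^ 2 = Fintype.card κ * ∑ i, ‖x i‖ ^ 2 +
      Fintype.card ι * ∑ j, ‖z j‖ ^ 2 - 2 * ⟪∑ i, x i, ∑ j, z j⟫_ℝ := by
  simp only [norm_sub_sq_real, Finset.sum_add_distrib, Finset.sum_sub_distrib, ← Finset.mul_sum,
    Finset.sum_const, Finset.card_univ, nsmul_eq_mul, ← inner_sum, ← sum_inner]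
  rw [sub_add_eq_add_sub]

lemma sum_sum_norm_sub_sq_le (x : ι → E) (z : κ → E) :
    ∑ i, ∑ j, ‖x i - z j‖ ^ 2 ≤
      (Fintype.card ι + Fintype.card κ) * (∑ i, ‖x i‖ ^ 2 + ∑ j, ‖z j‖ ^ 2) := by
  have hx := norm_sum_sq_le_card_mul_sum_norm_sq x
  have hz := norm_sum_sq_le_card_mul_sum_norm_sq z
  have hadd := norm_add_sq_real (∑ i, x i) (∑ j, z j)
  rw [sum_sum_norm_sub_sq]
  linarith [sq_nonneg ‖∑ i, x i + ∑ j, z j‖]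

lemma min_card_mul_le_sum_sum_norm_sub_sq (x : ι → E) (z : κ → E)
    (h : ∑ i, x i + ∑ j, z j = 0) :
    (min (Fintype.card ι) (Fintype.card κ) : ℝ) * (∑ i, ‖x i‖ ^ 2 + ∑ j, ‖z j‖ ^ 2) ≤
      ∑ i, ∑ j, ‖x i - z j‖ ^ 2 := by
  have hinner : ⟪∑ i, x i, ∑ j, z j⟫_ℝ ≤ 0 := by
    rw [eq_neg_of_add_eq_zero_right h, inner_neg_right, real_inner_self_eq_norm_sq]
    exact neg_nonpos.mpr (sq_nonneg _)
  rw [sum_sum_norm_sub_sq]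
  calc _ ≤ (Fintype.card κ : ℝ) * ∑ i, ‖x i‖ ^ 2 + Fintype.card ι * ∑ j, ‖z j‖ ^ 2 := by
        rw [mul_add]
        gcongr
        · exact min_le_right _ _
        · exact min_le_left _ _
    _ ≤ _ := by linarith

lemma sum_sum_inner_sub_eq_zero (x : ι → E) (z : κ → E) {w : ι → κ → E}
    (hrow : ∀ i, ∑ j, w i j = 0) (hcol : ∀ j, ∑ i, w i j = 0) :
    ∑ i, ∑ j, ⟪x i - z j, w i j⟫_ℝ = 0 := by
  simp only [inner_sub_left, Finset.sum_sub_distrib]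
  rw [Finset.sum_comm (f := fun i j => ⟪z j, w i j⟫_ℝ)]
  simp only [← inner_sum, hrow, hcol, inner_zero_right, Finset.sum_const_zero, sub_zero]

lemma sum_sum_norm_sub_add_sq (x : ι → E) (z : κ → E) {w : ι → κ → E}
    (hrow : ∀ i, ∑ j, w i j = 0) (hcol : ∀ j, ∑ i, w i j = 0) :
    ∑ i, ∑ j, ‖x i - z j + w i j‖ ^ 2 =
      ∑ i, ∑ j, ‖x i - z j‖ ^ 2 + ∑ i, ∑ j, ‖w i j‖ ^ 2 := by
  simp only [norm_add_sq_real, Finset.sum_add_distrib, ← Finset.mul_sum,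
    sum_sum_inner_sub_eq_zero x z hrow hcol, mul_zero, add_zero]

variable [Nonempty ι] [Nonempty κ]

lemma sum_sum_norm_error_sub_sq_le (x : ι → E) (z : κ → E) (y : ι → κ → E) :
    ∑ i, ∑ j, ‖x i - rowFit y i - (z j - colFit y j)‖ ^ 2 ≤
      ∑ i, ∑ j, ‖x i - z j - y i j‖ ^ 2 := by
  have hpyth := sum_sum_norm_sub_add_sq (fun i => x i - rowFit y i) (fun j => z j - colFit y j)
    (sum_residual_row_eq_zero y) (sum_residual_col_eq_zero y)
  have hsplit (i : ι) (j : κ) : x i - rowFit y i - (z j - colFit y j) +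
      (rowFit y i - colFit y j - y i j) = x i - z j - y i j := by abel
  simp only [hsplit] at hpyth
  rw [hpyth]
  exact le_add_of_nonneg_right (by positivity)

lemma min_card_mul_sum_norm_error_sq_le {x : ι → E} {z : κ → E}
    (h : ∑ i, x i + ∑ j, z j = 0) (y : ι → κ → E) :
    (min (Fintype.card ι) (Fintype.card κ) : ℝ) *
        (∑ i, ‖x i - rowFit y i‖ ^ 2 + ∑ j, ‖z j - colFit y j‖ ^ 2) ≤
      ∑ i, ∑ j, ‖x i - z j - y i j‖ ^ 2 := by
  refine (min_card_mul_le_sum_sum_norm_sub_sq _ _ ?_).trans (sum_sum_norm_error_sub_sq_le x z y)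
  rw [Finset.sum_sub_distrib, Finset.sum_sub_distrib, sub_add_sub_comm, h,
    sum_rowFit_add_sum_colFit, sub_zero]

theorem sqrt_sum_norm_error_sq_le {x : ι → E} {z : κ → E} (h : ∑ i, x i + ∑ j, z j = 0)
    {y : ι → κ → E} {δ : ℝ} (hδ : 0 ≤ δ) (hy : ∀ i j, ‖x i - z j - y i j‖ ≤ δ * ‖x i - z j‖) :
    √(∑ i, ‖x i - rowFit y i‖ ^ 2 + ∑ j, ‖z j - colFit y j‖ ^ 2) ≤
      √(Fintype.card ι + Fintype.card κ) / min √(Fintype.card ι) √(Fintype.card κ) * δ *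
        √(∑ i, ‖x i‖ ^ 2 + ∑ j, ‖z j‖ ^ 2) := by
  set P := ∑ i, ‖x i - rowFit y i‖ ^ 2 + ∑ j, ‖z j - colFit y j‖ ^ 2
  set Q := ∑ i, ‖x i‖ ^ 2 + ∑ j, ‖z j‖ ^ 2
  set μ : ℝ := min (Fintype.card ι) (Fintype.card κ)
  have hμ : 0 < μ :=
    lt_min (Nat.cast_pos.mpr Fintype.card_pos) (Nat.cast_pos.mpr Fintype.card_pos)
  have hsq : μ * P ≤ (Fintype.card ι + Fintype.card κ) * Q * δ ^ 2 := by
    calc μ * P ≤ ∑ i, ∑ j, ‖x i - z j - y i j‖ ^ 2 := min_card_mul_sum_norm_error_sq_le h y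
      _ ≤ ∑ i, ∑ j, (δ * ‖x i - z j‖) ^ 2 := by gcongr with i _ j _; exact hy i j
      _ = (∑ i, ∑ j, ‖x i - z j‖ ^ 2) * δ ^ 2 := by
        simp only [mul_pow, ← Finset.mul_sum, mul_comm]
      _ ≤ (Fintype.card ι + Fintype.card κ) * Q * δ ^ 2 := by
        gcongr
        exact sum_sum_norm_sub_sq_le x z
  calc √P ≤ √((Fintype.card ι + Fintype.card κ) / μ * δ ^ 2 * Q) := by
        gcongr
        rw [div_mul_eq_mul_div, div_mul_eq_mul_div, le_div_iff₀ hμ]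
        linarith
    _ = √(Fintype.card ι + Fintype.card κ) / √μ * δ * √Q := by
        rw [Real.sqrt_mul (by positivity), Real.sqrt_mul (by positivity), Real.sqrt_sq hδ,
          Real.sqrt_div (by positivity)]
    _ = _ := by rw [Real.sqrt_monotone.map_min]

end InnerProductSpace

section NormedDivisionRing

variable {D : Type*} [NormedDivisionRing D]

lemma norm_sub_inv_inv_add_le {d ν : D} {γ : ℝ} (hd : d ≠ 0) (hν : ‖d * ν‖ ≤ γ) (hγ : γ < 1) :
    ‖d - (d⁻¹ + ν)⁻¹‖ ≤ γ / (1 - γ) * ‖d‖ := by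
  set a := d⁻¹ + ν
  have hda : d * a = 1 + d * ν := by rw [mul_add, mul_inv_cancel₀ hd]
  have hlower : 1 - γ ≤ ‖d * a‖ := by
    have := norm_sub_le (d * a) (d * ν)
    rw [hda, add_sub_cancel_right, norm_one, ← hda] at this
    linarith
  have hpos : 0 < 1 - γ := sub_pos.mpr hγ
  have ha : a ≠ 0 := right_ne_zero_of_mul (norm_pos_iff.mp (hpos.trans_le hlower))
  have hdiff : d - a⁻¹ = d * ν * ((d * a)⁻¹ * d) := by
    rw [mul_inv_rev, inv_mul_cancel_right₀ hd, ← add_sub_cancel_left 1 (d * ν), ← hda, sub_mul,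
      mul_inv_cancel_right₀ ha, one_mul]
  calc ‖d - a⁻¹‖ = ‖d * ν‖ / ‖d * a‖ * ‖d‖ := by
        rw [hdiff, norm_mul _ (_ * d), norm_mul _ d, norm_inv, ← mul_assoc, div_eq_mul_inv]
    _ ≤ γ / (1 - γ) * ‖d‖ := by gcongr; exact (norm_nonneg _).trans hν

theorem noisy_recovery_general [InnerProductSpace ℝ D] [Nonempty ι] [Nonempty κ]
    {s : ι → D} {t : κ → D} (hst : ∀ i j, s i - t j ≠ 0) (hsum : ∑ i, s i + ∑ j, t j = 0)
    {N A : Matrix ι κ D} (hA : ∀ i j, A i j = (s i - t j)⁻¹ + N i j)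
    {γ : ℝ} (hN : ∀ i j, ‖(s i - t j) * N i j‖ ≤ γ) (hγ : γ < 1) :
    √(∑ i, ‖s i - rowFit (fun i j => (A i j)⁻¹) i‖ ^ 2 +
        ∑ j, ‖t j - colFit (fun i j => (A i j)⁻¹) j‖ ^ 2) ≤
      √(Fintype.card ι + Fintype.card κ) / min √(Fintype.card ι) √(Fintype.card κ) *
        (γ / (1 - γ)) * √(∑ i, ‖s i‖ ^ 2 + ∑ j, ‖t j‖ ^ 2) := by
  have hγ0 : 0 ≤ γ :=
    (norm_nonneg _).trans (hN (Classical.arbitrary ι) (Classical.arbitrary κ))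
  refine sqrt_sum_norm_error_sq_le hsum (div_nonneg hγ0 (sub_nonneg.mpr hγ.le)) fun i j => ?_
  rw [hA]
  exact norm_sub_inv_inv_add_le (hst i j) (hN i j) hγ

end NormedDivisionRing

/-- Recovery of Cauchy points from a noisy Cauchy matrix: if `s̃, t̃` are
normalized Cauchy points, `A = C(s̃,t̃) + N` has all entries nonzero, `ŝ, t̂`
is the explicit minimum-norm least squares solution computed from `A`, and
`γ := max_{i,j} |(s̃_i − t̃_j)·n_{ij}| < 1`, then
`‖[s̃; t̃] − [ŝ; t̂]‖₂ ≤ (√(m+n)/min{√m,√n})·(γ/(1−γ))·‖[s̃; t̃]‖₂`. -/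
theorem noisy_recovery (m n : ℕ) (hm : 0 < m) (hn : 0 < n)
    (st : Fin m → ℂ) (tt : Fin n → ℂ)
    (hct : ∀ i j, st i - tt j ≠ 0)
    (hnorm : (∑ i, st i) + ∑ j, tt j = 0)
    (N : Matrix (Fin m) (Fin n) ℂ)
    (A : Matrix (Fin m) (Fin n) ℂ)
    (hAdef : ∀ i j, A i j = (st i - tt j)⁻¹ + N i j)
    (hA : ∀ i j, A i j ≠ 0)
    (r : Fin m → ℂ) (hr : ∀ i, r i = (n : ℂ)⁻¹ * ∑ j, (A i j)⁻¹)
    (c : Fin n → ℂ) (hc : ∀ j, c j = (m : ℂ)⁻¹ * ∑ i, (A i j)⁻¹)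
    (σ : ℂ) (hσ : σ = ((m : ℂ) * n)⁻¹ * ∑ i, ∑ j, (A i j)⁻¹)
    (sh : Fin m → ℂ) (hsh : ∀ i, sh i = r i - (m : ℂ) * σ / ((m : ℂ) + n))
    (th : Fin n → ℂ) (hth : ∀ j, th j = -c j + (n : ℂ) * σ / ((m : ℂ) + n))
    (γ : ℝ)
    (hγ : γ = Finset.univ.sup' ⟨(⟨0, hm⟩, ⟨0, hn⟩), Finset.mem_univ _⟩
      (fun p : Fin m × Fin n => ‖(st p.1 - tt p.2) * N p.1 p.2‖))
    (hγ1 : γ < 1) :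
    Real.sqrt ((∑ i, ‖st i - sh i‖ ^ 2) +
        ∑ j, ‖tt j - th j‖ ^ 2) ≤
      Real.sqrt (m + n) / min (Real.sqrt m) (Real.sqrt n) * (γ / (1 - γ)) *
        Real.sqrt ((∑ i, ‖st i‖ ^ 2) +
          ∑ j, ‖tt j‖ ^ 2) := by
  have : NeZero m := ⟨hm.ne'⟩
  have : NeZero n := ⟨hn.ne'⟩
  have hrow : sh = rowFit fun i j => (A i j)⁻¹ := by
    ext1 i
    rw [rowFit_complex, hsh, hr, hσ, Fintype.card_fin, Fintype.card_fin]
  have hcol : th = colFit fun i j => (A i j)⁻¹ := by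
    ext1 j
    rw [colFit_complex, hth, hc, hσ, Fintype.card_fin, Fintype.card_fin]
  have hN (i : Fin m) (j : Fin n) : ‖(st i - tt j) * N i j‖ ≤ γ :=
    hγ ▸ Finset.le_sup' (fun p : Fin m × Fin n => ‖(st p.1 - tt p.2) * N p.1 p.2‖)
      (Finset.mem_univ (i, j))
  simpa only [hrow, hcol, Fintype.card_fin] using
    noisy_recovery_general hct hnorm hAdef hN hγ1
end
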